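/- For every integer k ≥ 0, b₂₁(4k + 1) is congruent modulo 2 to the number of pairs (x, y) of nonnegative integers satisfying 8x^2 + 3y^2 = 24k + 11 and 3 ∤ y. -/

import Mathlib

/-- `b21 n` is the number of 21-regular partitions of `n`,
i.e. partitions of `n` none of whose parts is divisible by 21. -/
def b21 (n : ℕ) : ℕ :=
  (Finset.univ.filter fun c : n.Partition => ∀ i ∈ c.parts, ¬ (21 ∣ i)).card


lemma parity_invol (T : Set (ℤ × ℤ)) (hT : T.Finite) (h : ∀ p ∈ T, (p.1, -p.2) ∈ T) :
    (T.ncard : ZMod 2) = ({p ∈ T | p.2 = 0}.ncard : ZMod 2) := by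
  classical
  have h1 : T = {p ∈ T | p.2 = 0} ∪ {p ∈ T | p.2 ≠ 0} := by
    ext p; simp only [Set.mem_union, Set.mem_ofPred_eq]; tauto
  have f1 : {p ∈ T | p.2 = 0}.Finite := hT.subset (fun p hp => hp.1)
  have f2 : {p ∈ T | p.2 ≠ 0}.Finite := hT.subset (fun p hp => hp.1)
  have hd : Disjoint {p ∈ T | p.2 = 0} {p ∈ T | p.2 ≠ 0} := by
    rw [Set.disjoint_left]; rintro p ⟨_, hp⟩ ⟨_, hq⟩; exact hq hp
  conv_lhs => rw [h1, Set.ncard_union_eq hd f1 f2]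
  push_cast
  suffices hs : (({p ∈ T | p.2 ≠ 0}.ncard : ℕ) : ZMod 2) = 0 by rw [hs, add_zero]
  rw [Set.ncard_eq_toFinset_card _ f2, Finset.cast_card]
  refine Finset.sum_involution (fun p _ => (p.1, -p.2)) ?_ ?_ ?_ ?_
  · intro a ha; decide
  · rintro ⟨a, b⟩ ha _ hab
    have := (f2.mem_toFinset.1 ha).2
    simp only [Prod.mk.injEq, true_and] at hab
    simp only at this
    omega
  · rintro ⟨a, b⟩ ha
    have hh := f2.mem_toFinset.1 ha
    refine f2.mem_toFinset.2 ⟨h _ hh.1, ?_⟩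
    simpa using hh.2
  · rintro ⟨a, b⟩ ha; simp

lemma ncard_axis (T : Set (ℤ × ℤ)) (L : ℤ) (Q : ℤ → Prop)
    (hT : ∀ a, (a, 0) ∈ T ↔ 0 < a ∧ a ^ 2 = L ∧ Q a) [Decidable (∃ a, (a, (0:ℤ)) ∈ T)] :
    ({p ∈ T | p.2 = 0}.ncard) = if ∃ a, (a, (0:ℤ)) ∈ T then 1 else 0 := by
  split_ifs with h
  · obtain ⟨a, ha⟩ := h
    rw [Set.ncard_eq_one]
    refine ⟨(a, 0), ?_⟩
    ext ⟨c, d⟩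
    simp only [Set.mem_ofPred_eq, Set.mem_singleton_iff, Prod.mk.injEq]
    constructor
    · rintro ⟨h1, rfl⟩
      have h2 := (hT _).1 h1
      have h3 := (hT _).1 ha
      exact ⟨(pow_left_inj₀ h2.1.le h3.1.le two_ne_zero).1 (h2.2.1.trans h3.2.1.symm), rfl⟩
    · rintro ⟨rfl, rfl⟩; exact ⟨ha, rfl⟩
  · have : {p ∈ T | p.2 = 0} = ∅ := by
      ext ⟨c, d⟩
      simp only [Set.mem_ofPred_eq, Set.mem_empty_iff_false, iff_false]
      rintro ⟨h1, rfl⟩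
      exact h ⟨c, h1⟩
    rw [this]; simp

def Dset (L : ℤ) : Set (ℤ × ℤ) := {p | 0 < p.1 ∧ p.1 ^ 2 + 2 * p.2 ^ 2 = L ∧ ¬ (3 ∣ p.1 + p.2)}
def Cset (L : ℤ) : Set (ℕ × ℕ) :=
  {p | (p.1 : ℤ) ^ 2 + 2 * (p.2 : ℤ) ^ 2 = L ∧ ¬ (3 ∣ p.1) ∧ ¬ (3 ∣ p.2)}
def Gset (M : ℤ) : Set (ℤ × ℤ) := {p | 0 < p.1 ∧ p.1 ^ 2 + 7 * p.2 ^ 2 = M ∧ ¬ (3 ∣ p.1)}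

lemma box_finite (T : Set (ℤ × ℤ)) (L : ℤ) (h : ∀ p ∈ T, p.1 ^ 2 + p.2 ^ 2 ≤ L) : T.Finite := by
  apply (Set.finite_Icc ((-L, -L) : ℤ × ℤ) (L, L)).subset
  rintro ⟨a, b⟩ hp
  have := h _ hp
  simp only at this
  rw [Set.mem_Icc, Prod.mk_le_mk, Prod.mk_le_mk]
  refine ⟨⟨?_, ?_⟩, ?_, ?_⟩ <;> nlinarith [sq_nonneg (a+1), sq_nonneg (a-1), sq_nonneg (b-1), sq_nonneg (b+1), sq_nonneg a, sq_nonneg b, Int.le_self_sq a, Int.le_self_sq b, Int.le_self_sq (-a), Int.le_self_sq (-b)]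

lemma Dset_finite (L : ℤ) : (Dset L).Finite :=
  box_finite _ L (by rintro ⟨a, b⟩ ⟨_, h, _⟩; simp only at h ⊢; nlinarith [sq_nonneg b])

lemma Gset_finite (L : ℤ) : (Gset L).Finite :=
  box_finite _ L (by rintro ⟨a, b⟩ ⟨_, h, _⟩; simp only at h ⊢; nlinarith [sq_nonneg b])

lemma sq3 (a : ℤ) (h : ¬ (3 ∣ a)) : a ^ 2 % 3 = 1 := by
  have : a % 3 = 1 ∨ a % 3 = 2 := by omega
  rcases this with h | h <;> simp [pow_two, Int.mul_emod, h]

lemma sq3' (a : ℤ) : (3 ∣ a ∧ a ^ 2 % 3 = 0) ∨ (¬ (3 ∣ a) ∧ a ^ 2 % 3 = 1) := by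
  by_cases h : 3 ∣ a
  · left; refine ⟨h, ?_⟩
    have : a % 3 = 0 := by omega
    simp [pow_two, Int.mul_emod, this]
  · right; exact ⟨h, sq3 a h⟩

lemma D_base (L : ℤ) (h3 : ¬ (3 ∣ L)) [Decidable (∃ w : ℤ, L = w ^ 2 ∨ L = 3 * w ^ 2)] (hodd : L % 2 = 1) :
    ((Dset L).ncard : ZMod 2) = if ∃ w : ℤ, L = w ^ 2 ∨ L = 3 * w ^ 2 then 1 else 0 := by
  classical
  rw [parity_invol _ (Dset_finite L)]
  · rw [ncard_axis _ L (fun a => ¬ 3 ∣ a + 0)]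
    · have : (∃ a, (a, (0:ℤ)) ∈ Dset L) ↔ ∃ w : ℤ, L = w ^ 2 ∨ L = 3 * w ^ 2 := by
        constructor
        · rintro ⟨a, _, h, _⟩; exact ⟨a, Or.inl (by simp at h; exact h.symm)⟩
        · rintro ⟨w, h | h⟩
          · refine ⟨|w|, ?_, ?_, ?_⟩
            · rw [abs_pos]; rintro rfl; simp at h; omega
            · simp [h]
            · simp only [add_zero, dvd_abs]
              intro hw; apply h3; rw [h]; exact dvd_pow hw two_ne_zero
          · exact absurd ⟨_, h⟩ h3
      simp only [this]
      split_ifs <;> simp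
    · intro a; simp [Dset]
  · rintro ⟨a, b⟩ ⟨h1, h2, h4⟩
    refine ⟨h1, by simpa using h2, ?_⟩
    simp only at h1 h2 h4 ⊢
    intro h5
    rcases sq3' a with ha | ha <;> rcases sq3' b with hb | hb <;> omega

lemma D_step1 (L : ℤ) (h3 : 3 ∣ L) : (Dset L).ncard = (Cset L).ncard := by
  refine Set.ncard_congr (fun p _ => (p.1.natAbs, p.2.natAbs)) ?_ ?_ ?_
  · rintro ⟨a, b⟩ ⟨h1, h2, h4⟩
    simp only at h1 h2 h4
    have := sq3' a; have := sq3' b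
    refine ⟨by simpa using h2, ?_, ?_⟩ <;> simp only <;> omega
  · rintro ⟨a, b⟩ ⟨c, d⟩ ⟨h1, h2, h4⟩ ⟨k1, k2, k4⟩ h
    simp only [Prod.mk.injEq] at h1 h2 h4 k1 k2 k4 h ⊢
    have e1 : 3 ∣ a - b := by
      have := sq3' a; have := sq3' b
      have : a % 3 = 0 ∨ a % 3 = 1 ∨ a % 3 = 2 := by omega
      have : b % 3 = 0 ∨ b % 3 = 1 ∨ b % 3 = 2 := by omega
      omega
    have e2 : 3 ∣ c - d := by
      have := sq3' c; have := sq3' d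
      have : c % 3 = 0 ∨ c % 3 = 1 ∨ c % 3 = 2 := by omega
      have : d % 3 = 0 ∨ d % 3 = 1 ∨ d % 3 = 2 := by omega
      omega
    omega
  · rintro ⟨u, v⟩ ⟨h, hu, hv⟩
    simp only at h hu hv
    by_cases hs : 3 ∣ (u : ℤ) + v
    · refine ⟨(u, -v), ⟨?_, ?_, ?_⟩, ?_⟩
      · simp only; omega
      · simpa using h
      · simp only; omega
      · simp
    · refine ⟨(u, v), ⟨?_, ?_, ?_⟩, ?_⟩
      · simp only; omega
      · simpa using h
      · simp only; omega
      · simp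

lemma D_step2 (L : ℤ) (hodd : L % 2 = 1) : (Cset (3 * L)).ncard = (Dset L).ncard := by
  symm
  refine Set.ncard_congr (fun p _ => ((p.1 - 2 * p.2).natAbs, (p.1 + p.2).natAbs)) ?_ ?_ ?_
  · rintro ⟨a, b⟩ ⟨h1, h2, h4⟩
    simp only at h1 h2 h4
    refine ⟨?_, ?_, ?_⟩
    · simp only [Int.natCast_natAbs, sq_abs]; rw [← h2]; ring
    all_goals simp only; omega
  · rintro ⟨a, b⟩ ⟨c, d⟩ ⟨h1, h2, h4⟩ ⟨k1, k2, k4⟩ h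
    simp only [Prod.mk.injEq] at h1 h2 h4 k1 k2 k4 h ⊢
    omega
  · rintro ⟨u, v⟩ ⟨h, hu, hv⟩
    simp only at h hu hv
    have key : ∀ a b : ℤ, a ^ 2 + 2 * b ^ 2 = L → ¬ (3 ∣ a + b) → (a - 2 * b).natAbs = u → (a + b).natAbs = v →
      ∃ p, ∃ (_ : p ∈ Dset L), ((p.1 - 2 * p.2).natAbs, (p.1 + p.2).natAbs) = (u, v) := by
      intro a b hab h3 h1 h2
      rcases lt_trichotomy a 0 with ha | ha | ha
      · refine ⟨(-a, -b), ⟨?_, ?_, ?_⟩, ?_⟩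
        · simp only; omega
        · simpa using hab
        · simp only; omega
        · simp only [Prod.mk.injEq]; omega
      · subst ha; exfalso
        simp at hab; omega
      · refine ⟨(a, b), ⟨?_, ?_, ?_⟩, ?_⟩
        · simp only; omega
        · simpa using hab
        · simp only; omega
        · simp only [Prod.mk.injEq]; omega
    by_cases hs : 3 ∣ (u : ℤ) - v
    · obtain ⟨t, ht⟩ := hs
      refine key (v + t) (-t) ?_ ?_ ?_ ?_
      · have : (u : ℤ) = v + 3 * t := by linarith
        rw [this] at h; linarith
      all_goals omega
    · have hs : 3 ∣ (u : ℤ) + v := by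
        have : u % 3 = 1 ∨ u % 3 = 2 := by omega
        have : v % 3 = 1 ∨ v % 3 = 2 := by omega
        omega
      obtain ⟨t, ht⟩ := hs
      refine key (-v + t) (-t) ?_ ?_ ?_ ?_
      · have : (u : ℤ) = -v + 3 * t := by linarith
        rw [this] at h; linarith
      all_goals omega

open Classical in
lemma D_parity (n : ℕ) : ∀ (L : ℤ), L.toNat = n → 0 < L → L % 2 = 1 →
    ((Dset L).ncard : ZMod 2) = if ∃ w : ℤ, L = w ^ 2 ∨ L = 3 * w ^ 2 then 1 else 0 := by
  induction n using Nat.strong_induction_on with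
  | _ n ih =>
    intro L hn h0 hodd
    by_cases h3 : 3 ∣ L
    · obtain ⟨M, rfl⟩ := h3
      rw [D_step1 _ ⟨M, rfl⟩, D_step2 M (by omega), ih M.toNat (by omega) M rfl (by omega) (by omega)]
      have : (∃ w : ℤ, M = w ^ 2 ∨ M = 3 * w ^ 2) ↔ (∃ w : ℤ, 3 * M = w ^ 2 ∨ 3 * M = 3 * w ^ 2) := by
        constructor
        · rintro ⟨w, h | h⟩
          · exact ⟨w, Or.inr (by rw [h])⟩
          · exact ⟨3 * w, Or.inl (by rw [h]; ring)⟩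
        · rintro ⟨w, h | h⟩
          · have hw : 3 ∣ w := Int.prime_three.dvd_of_dvd_pow (Dvd.intro _ h)
            obtain ⟨t, rfl⟩ := hw
            exact ⟨t, Or.inr (by linarith)⟩
          · exact ⟨w, Or.inl (by linarith)⟩
      simp only [this]
    · exact D_base L h3 hodd

def Qset (M : ℤ) : Set (ℕ × ℕ) :=
  {p | (p.1 : ℤ) ^ 2 + 7 * (p.2 : ℤ) ^ 2 = 16 * M ∧ p.1 % 2 = 1 ∧ ¬ (3 ∣ p.2)}

lemma sq4 (a : ℤ) : (a % 2 = 0 ∧ a ^ 2 % 4 = 0) ∨ (a % 2 = 1 ∧ a ^ 2 % 4 = 1) := by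
  rcases Int.emod_two_eq_zero_or_one a with h | h
  · obtain ⟨c, rfl⟩ : ∃ c, a = 2 * c := ⟨a / 2, by omega⟩
    left; refine ⟨h, ?_⟩; ring_nf; omega
  · obtain ⟨c, rfl⟩ : ∃ c, a = 2 * c + 1 := ⟨a / 2, by omega⟩
    right; refine ⟨h, ?_⟩; ring_nf; omega

lemma Q_eq_G (M : ℤ) (hodd : M % 2 = 1) : (Qset M).ncard = (Gset M).ncard := by
  symm
  refine Set.ncard_congr (fun p _ => ((3 * p.1 + 7 * p.2).natAbs, (p.1 - 3 * p.2).natAbs)) ?_ ?_ ?_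
  · rintro ⟨a, b⟩ ⟨h1, h2, h4⟩
    simp only at h1 h2 h4
    have := sq4 a; have := sq4 b
    refine ⟨?_, ?_, ?_⟩
    · simp only [Int.natCast_natAbs, sq_abs]; rw [← h2]; ring
    all_goals simp only; omega
  · rintro ⟨a, b⟩ ⟨c, d⟩ ⟨h1, h2, h4⟩ ⟨k1, k2, k4⟩ h
    simp only [Prod.mk.injEq] at h1 h2 h4 k1 k2 k4 h ⊢
    have := sq4 a; have := sq4 b; have := sq4 c; have := sq4 d
    omega
  · rintro ⟨x, y⟩ ⟨h, hx, hy⟩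
    simp only at h hx hy
    have hyo : (y : ℤ) % 2 = 1 := by
      have := sq4 x; have := sq4 y; omega
    have key : ∀ a b : ℤ, a ^ 2 + 7 * b ^ 2 = M → ¬ (3 ∣ a) → (3 * a + 7 * b).natAbs = x → (a - 3 * b).natAbs = y →
      ∃ p, ∃ (_ : p ∈ Gset M), ((3 * p.1 + 7 * p.2).natAbs, (p.1 - 3 * p.2).natAbs) = (x, y) := by
      intro a b hab h3 h1 h2
      rcases lt_trichotomy a 0 with ha | ha | ha
      · refine ⟨(-a, -b), ⟨?_, ?_, ?_⟩, ?_⟩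
        · simp only; omega
        · simpa using hab
        · simp only; omega
        · simp only [Prod.mk.injEq]; omega
      · subst ha; simp at h3
      · refine ⟨(a, b), ⟨?_, ?_, ?_⟩, ?_⟩
        · simp only; omega
        · simpa using hab
        · simp only; omega
        · simp only [Prod.mk.injEq]; omega
    have key2 : ∀ z : ℤ, z.natAbs = y → 16 ∣ (x : ℤ) - 3 * z →
      ∃ p, ∃ (_ : p ∈ Gset M), ((3 * p.1 + 7 * p.2).natAbs, (p.1 - 3 * p.2).natAbs) = (x, y) := by
      rintro z hz ⟨t, ht⟩
      have hz2 : (y : ℤ) ^ 2 = z ^ 2 := by rw [← hz]; simp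
      refine key (z + 3 * t) t ?_ ?_ ?_ ?_
      · have : (x : ℤ) = 3 * z + 16 * t := by linarith
        rw [this, hz2] at h; linarith
      all_goals omega
    have hy2 := sq4 y
    obtain ⟨e, he⟩ : ∃ e : ℤ, M - (y : ℤ) ^ 2 = 2 * e := ⟨(M - (y : ℤ) ^ 2) / 2, by omega⟩
    obtain ⟨s, hs⟩ : ∃ s : ℤ, (x : ℤ) - 3 * y = 2 * s := ⟨((x : ℤ) - 3 * y) / 2, by omega⟩
    have hprod : s * (s + 3 * y) = 8 * e := by
      have : (x : ℤ) = 3 * y + 2 * s := by linarith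
      rw [this] at h; nlinarith
    rcases Int.emod_two_eq_zero_or_one s with h2 | h2
    · have hc : IsCoprime (8 : ℤ) (s + 3 * y) := by
        have : IsCoprime (2 : ℤ) (s + 3 * y) := by
          rw [Int.prime_two.coprime_iff_not_dvd]; omega
        simpa using this.pow_left (m := 3)
      have : (8 : ℤ) ∣ s := hc.dvd_of_dvd_mul_right ⟨e, hprod⟩
      exact key2 y (by simp) (by omega)
    · have hc : IsCoprime (8 : ℤ) s := by
        have : IsCoprime (2 : ℤ) s := by
          rw [Int.prime_two.coprime_iff_not_dvd]; omega
        simpa using this.pow_left (m := 3)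
      have : (8 : ℤ) ∣ s + 3 * y := hc.dvd_of_dvd_mul_left ⟨e, hprod⟩
      exact key2 (-y) (by simp) (by omega)

open Classical in
lemma G_parity (M : ℤ) :
    ((Gset M).ncard : ZMod 2) = if ∃ w : ℤ, ¬ (3 ∣ w) ∧ w ^ 2 = M then 1 else 0 := by
  rw [parity_invol _ (Gset_finite M)]
  · rw [ncard_axis _ M (fun a => ¬ 3 ∣ a)]
    · have : (∃ a, (a, (0:ℤ)) ∈ Gset M) ↔ ∃ w : ℤ, ¬ (3 ∣ w) ∧ w ^ 2 = M := by
        constructor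
        · rintro ⟨a, _, h, h3⟩; exact ⟨a, h3, by simpa using h⟩
        · rintro ⟨w, h3, h⟩
          refine ⟨|w|, ?_, ?_, ?_⟩
          · rw [abs_pos]; rintro rfl; simp at h3
          · simp [h]
          · simpa using h3
      simp only [this]
      split_ifs <;> simp
    · intro a; simp [Gset]
  · rintro ⟨a, b⟩ ⟨h1, h2, h4⟩
    exact ⟨h1, by simpa using h2, h4⟩

open PowerSeries in
noncomputable def theta (A : ℕ → ℕ → Prop) : (ZMod 2)⟦X⟧ :=
  open Classical in PowerSeries.mk fun n => if ∃ z, A z n then 1 else 0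

open Classical in
lemma coeff_theta (A : ℕ → ℕ → Prop) (n : ℕ) :
    (theta A).coeff n = if ∃ z, A z n then 1 else 0 := by
  rw [theta, PowerSeries.coeff_mk]

lemma coeff_theta_mul (A B : ℕ → ℕ → Prop) (n : ℕ)
    (hA : ∀ x i i', A x i → A x i' → i = i') (hA' : ∀ x x' i, A x i → A x' i → x = x')
    (hB' : ∀ x x' i, B x i → B x' i → x = x') :
    (theta A * theta B).coeff n =
      (({p : ℕ × ℕ | ∃ i j, i + j = n ∧ A p.1 i ∧ B p.2 j}.ncard : ℕ) : ZMod 2) := by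
  classical
  rw [PowerSeries.coeff_mul]
  have h1 : ∑ p ∈ Finset.HasAntidiagonal.antidiagonal n, (theta A).coeff p.1 * (theta B).coeff p.2 =
    ∑ p ∈ Finset.HasAntidiagonal.antidiagonal n, (if (∃ z, A z p.1) ∧ ∃ z, B z p.2 then (1 : ZMod 2) else 0) := by
    refine Finset.sum_congr rfl fun p _ => ?_
    rw [coeff_theta, coeff_theta]
    by_cases ha : ∃ z, A z p.1 <;> by_cases hb : ∃ z, B z p.2 <;> simp only [ha, hb] <;> simp
  rw [h1, Finset.sum_boole, ← Set.ncard_coe_finset]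
  congr 1
  refine Set.ncard_congr (fun p hp => 
    ((Finset.mem_filter.1 (Finset.mem_coe.1 hp)).2.1.choose, (Finset.mem_filter.1 (Finset.mem_coe.1 hp)).2.2.choose)) ?_ ?_ ?_
  · intro p hp
    have hp' := Finset.mem_filter.1 (Finset.mem_coe.1 hp)
    exact ⟨p.1, p.2, Finset.HasAntidiagonal.mem_antidiagonal.1 hp'.1, hp'.2.1.choose_spec, hp'.2.2.choose_spec⟩
  · intro p q hp hq h
    have hp' := Finset.mem_filter.1 (Finset.mem_coe.1 hp)
    have hq' := Finset.mem_filter.1 (Finset.mem_coe.1 hq)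
    rw [Prod.mk.injEq] at h
    have e1 := hp'.2.1.choose_spec
    rw [h.1] at e1
    have := hA _ _ _ e1 hq'.2.1.choose_spec
    have k1 := Finset.HasAntidiagonal.mem_antidiagonal.1 hp'.1
    have k2 := Finset.HasAntidiagonal.mem_antidiagonal.1 hq'.1
    ext <;> omega
  · rintro ⟨x, y⟩ ⟨i, j, hij, hx, hy⟩
    have hp : (i, j) ∈ ((Finset.HasAntidiagonal.antidiagonal n).filter fun p => (∃ z, A z p.1) ∧ ∃ z, B z p.2) :=
      Finset.mem_filter.2 ⟨Finset.HasAntidiagonal.mem_antidiagonal.2 hij, ⟨x, hx⟩, ⟨y, hy⟩⟩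
    refine ⟨(i, j), Finset.mem_coe.2 hp, ?_⟩
    have hp' := (Finset.mem_filter.1 hp).2
    rw [Prod.mk.injEq]
    exact ⟨hA' _ _ _ hp'.1.choose_spec hx, hB' _ _ _ hp'.2.choose_spec hy⟩

/-- exponents of the Euler product in `q ^ k` modulo 2 -/
def fP (k : ℕ) (z n : ℕ) : Prop := z % 2 = 1 ∧ ¬ (3 ∣ z) ∧ 24 * n + k = k * z ^ 2
def psiP (k : ℕ) (z n : ℕ) : Prop := z % 2 = 1 ∧ 8 * n + k = k * z ^ 2
def omP (z n : ℕ) : Prop := ¬ (3 ∣ z) ∧ 3 * n + 1 = z ^ 2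

lemma fP1 (k x i i') (h : fP k x i) (h' : fP k x i') : i = i' := by
  have := h.2.2; have := h'.2.2; omega
lemma fP2 (k : ℕ) (hk : k ≠ 0) (x x' i) (h : fP k x i) (h' : fP k x' i) : x = x' := by
  have := h.2.2.symm.trans h'.2.2
  have := Nat.eq_of_mul_eq_mul_left (by omega) this
  exact (Nat.pow_left_injective (n := 2) (by omega)) this
lemma psiP1 (k x i i') (h : psiP k x i) (h' : psiP k x i') : i = i' := by
  have := h.2; have := h'.2; omega
lemma psiP2 (k : ℕ) (hk : k ≠ 0) (x x' i) (h : psiP k x i) (h' : psiP k x' i) : x = x' := by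
  have := h.2.symm.trans h'.2
  have := Nat.eq_of_mul_eq_mul_left (by omega) this
  exact (Nat.pow_left_injective (n := 2) (by omega)) this
lemma omP2 (x x' i) (h : omP x i) (h' : omP x' i) : x = x' := by
  have := h.2.symm.trans h'.2
  exact (Nat.pow_left_injective (n := 2) (by omega)) this

lemma sq24 (z : ℕ) (h2 : z % 2 = 1) (h3 : ¬ (3 ∣ z)) : ∃ m, z ^ 2 = 24 * m + 1 := by
  have : z % 24 = 1 ∨ z % 24 = 5 ∨ z % 24 = 7 ∨ z % 24 = 11 ∨ z % 24 = 13 ∨ z % 24 = 17 ∨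
    z % 24 = 19 ∨ z % 24 = 23 := by omega
  have h : z ^ 2 % 24 = 1 := by
    rcases this with h | h | h | h | h | h | h | h <;> simp [Nat.pow_mod, h]
  exact ⟨z ^ 2 / 24, by omega⟩

lemma sq8 (z : ℕ) (h2 : z % 2 = 1) : ∃ m, z ^ 2 = 8 * m + 1 := by
  have : z % 8 = 1 ∨ z % 8 = 3 ∨ z % 8 = 5 ∨ z % 8 = 7 := by omega
  have h : z ^ 2 % 8 = 1 := by
    rcases this with h | h | h | h <;> simp [Nat.pow_mod, h]
  exact ⟨z ^ 2 / 8, by omega⟩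

open PowerSeries

lemma expand_f (k : ℕ) (hk : k ≠ 0) : expand k hk (theta (fP 1)) = theta (fP k) := by
  classical
  ext n
  by_cases h : k ∣ n
  · obtain ⟨m, rfl⟩ := h
    rw [coeff_expand_mul, coeff_theta, coeff_theta]
    have : ∀ z, fP 1 z m ↔ fP k z (k * m) := by
      intro z
      simp only [fP, and_congr_right_iff]
      intro _ _
      have : 24 * (k * m) + k = k * (24 * m + 1) := by ring
      rw [this, one_mul, Nat.mul_right_inj hk]
    simp only [this]
  · rw [coeff_expand_of_not_dvd _ _ _ h, coeff_theta, if_neg]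
    rintro ⟨z, h2, h3, hz⟩
    obtain ⟨m, hm⟩ := sq24 z h2 h3
    apply h
    refine ⟨m, ?_⟩
    rw [hm] at hz
    have : k * (24 * m + 1) = 24 * (k * m) + k := by ring
    omega

lemma expand_psi (k : ℕ) (hk : k ≠ 0) : expand k hk (theta (psiP 1)) = theta (psiP k) := by
  classical
  ext n
  by_cases h : k ∣ n
  · obtain ⟨m, rfl⟩ := h
    rw [coeff_expand_mul, coeff_theta, coeff_theta]
    have : ∀ z, psiP 1 z m ↔ psiP k z (k * m) := by
      intro z
      simp only [psiP, and_congr_right_iff]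
      intro _
      have : 8 * (k * m) + k = k * (8 * m + 1) := by ring
      rw [this, one_mul, Nat.mul_right_inj hk]
    simp only [this]
  · rw [coeff_expand_of_not_dvd _ _ _ h, coeff_theta, if_neg]
    rintro ⟨z, h2, hz⟩
    obtain ⟨m, hm⟩ := sq8 z h2
    apply h
    refine ⟨m, ?_⟩
    rw [hm] at hz
    have : k * (8 * m + 1) = 8 * (k * m) + k := by ring
    omega

lemma pent_eq : pentagonalSeries (ZMod 2) = theta (fP 1) := by
  classical
  ext n
  rw [coeff_theta]
  split_ifs with h
  · obtain ⟨z, h2, h3, hz⟩ := h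
    have : ∃ k : ℤ, (6 * k - 1) ^ 2 = (z : ℤ) ^ 2 := by
      have : z % 6 = 1 ∨ z % 6 = 5 := by omega
      rcases this with h | h
      · refine ⟨-(z / 6 : ℕ), ?_⟩
        have : (z : ℤ) = 6 * (z / 6 : ℕ) + 1 := by omega
        rw [this]; generalize ((z / 6 : ℕ) : ℤ) = t; ring
      · refine ⟨(z / 6 : ℕ) + 1, ?_⟩
        have : (z : ℤ) = 6 * (z / 6 : ℕ) + 5 := by omega
        rw [this]; generalize ((z / 6 : ℕ) : ℤ) = t; ring
    obtain ⟨k, hk⟩ := this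
    have hp : pentagonal k = n := by
      have := two_mul_natCast_pentagonal k
      have hz' : 24 * (n : ℤ) + 1 = (z : ℤ) ^ 2 := by exact_mod_cast (by linarith : 24 * n + 1 = z ^ 2)
      have : (pentagonal k : ℤ) = n := by nlinarith
      exact_mod_cast this
    rw [← hp, coeff_pentagonalSeries_pentagonal]
    rcases Int.even_or_odd k with h | h
    · simp [Int.negOnePow_even _ h]
    · simp [Int.negOnePow_odd _ h]
  · apply coeff_pentagonalSeries_eq_zero
    rintro ⟨k, rfl⟩
    apply h
    refine ⟨(6 * k - 1).natAbs, by omega, by omega, ?_⟩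
    have := two_mul_natCast_pentagonal k
    zify
    rw [sq_abs]
    push_cast
    nlinarith

lemma expand_two (f : (ZMod 2)⟦X⟧) : expand 2 two_ne_zero f = f ^ 2 := by
  have := MvPowerSeries.map_frobenius_expand (R := ZMod 2) 2 two_ne_zero (f := f)
  rw [ZMod.frobenius_zmod, MvPowerSeries.map_id] at this
  exact this

lemma gen_b21 : (PowerSeries.mk fun n => (b21 n : ZMod 2)) * theta (fP 1) = theta (fP 21) := by
  let _ : TopologicalSpace (ZMod 2) := ⊥
  have _ : DiscreteTopology (ZMod 2) := ⟨rfl⟩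
  open WithPiTopology in
  have h1 : (PowerSeries.mk fun n => (b21 n : ZMod 2)) =
      PowerSeries.mk fun n ↦ ((Nat.Partition.countRestricted n 21).card : ZMod 2) := by
    ext n
    rw [coeff_mk, coeff_mk, ← Nat.Partition.card_restricted_eq_card_countRestricted n (by norm_num)]
    rfl
  open WithPiTopology in
  have h2 := (Nat.Partition.hasProd_powerSeriesMk_card_countRestricted (ZMod 2) (m := 21) (by norm_num)).mul
    (hasProd_one_sub_X_pow (ZMod 2))
  rw [h1, ← expand_f 21 (by norm_num), ← pent_eq]
  refine h2.unique ?_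
  open WithPiTopology in
  have hc : Continuous (expand (R := ZMod 2) 21 (by norm_num)) := by
    rw [continuous_iff_continuousAt]
    intro f
    rw [ContinuousAt, tendsto_iff_coeff_tendsto]
    intro d
    by_cases hd : 21 ∣ d
    · obtain ⟨m, rfl⟩ := hd
      simp only [coeff_expand_mul]
      exact (continuous_coeff _ m).tendsto f
    · simp only [coeff_expand_of_not_dvd _ _ _ hd]
      exact tendsto_const_nhds
  open WithPiTopology in
  have h3 := (hasProd_one_sub_X_pow (ZMod 2)).map (expand (R := ZMod 2) 21 (by norm_num)) hc
  convert! h3 using 1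
  ext1 i
  simp only [Function.comp_apply, map_sub, map_one, map_pow, expand_X]
  simp_rw [pow_mul]
  rw [geom_sum_mul_neg, ← pow_mul, ← pow_mul, mul_comm]

/-- Jacobi modulo 2 -/
lemma f_cube : theta (fP 1) * theta (fP 2) = theta (psiP 1) := by
  classical
  ext n
  rw [coeff_theta_mul _ _ _ (fP1 1) (fP2 1 (by norm_num)) (fP2 2 (by norm_num)), coeff_theta]
  have h : {p : ℕ × ℕ | ∃ i j, i + j = n ∧ fP 1 p.1 i ∧ fP 2 p.2 j} = Cset (3 * (8 * n + 1)) := by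
    ext ⟨u, v⟩
    simp only [fP, Cset, Set.mem_ofPred_eq]
    constructor
    · rintro ⟨i, j, hij, ⟨h1, h2, h3⟩, k1, k2, k3⟩
      refine ⟨?_, h2, k2⟩
      zify at h3 k3 hij; linarith
    · rintro ⟨h, h2, k2⟩
      have hu : u % 2 = 1 ∧ v % 2 = 1 := by
        have a1 := sq4 u; have a2 := sq4 v
        omega
      obtain ⟨i, hi⟩ := sq24 u hu.1 h2
      obtain ⟨j, hj⟩ := sq24 v hu.2 k2
      refine ⟨i, 2 * j, ?_, ⟨hu.1, h2, ?_⟩, hu.2, k2, ?_⟩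
      · zify at hi hj; zify; linarith
      · omega
      · omega
  rw [h, D_step2 _ (by omega), D_parity _ _ rfl (by omega) (by omega)]
  have : (∃ w : ℤ, 8 * (n : ℤ) + 1 = w ^ 2 ∨ 8 * (n : ℤ) + 1 = 3 * w ^ 2) ↔ ∃ z, psiP 1 z n := by
    constructor
    · rintro ⟨w, h | h⟩
      · refine ⟨w.natAbs, ?_, ?_⟩
        · have := sq4 w; omega
        · zify; simp [h]
      · have := sq4 w; omega
    · rintro ⟨z, hz, h⟩
      refine ⟨z, Or.inl ?_⟩
      zify at h; linarith
  simp only [this]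

lemma f_om : theta (fP 1) * theta omP = theta (psiP 3) := by
  classical
  ext n
  rw [coeff_theta_mul _ _ _ (fP1 1) (fP2 1 (by norm_num)) omP2, coeff_theta]
  have h : {p : ℕ × ℕ | ∃ i j, i + j = n ∧ fP 1 p.1 i ∧ omP p.2 j}.ncard = (Cset (3 * (8 * n + 3))).ncard := by
    refine Set.ncard_congr (fun p _ => (p.1, 2 * p.2)) ?_ ?_ ?_
    · rintro ⟨u, v⟩ ⟨i, j, hij, ⟨h1, h2, h3⟩, k1, k2⟩
      simp only at h1 h2 h3 k1 k2
      refine ⟨?_, h2, by simp only; omega⟩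
      zify at h3 k2 hij; push_cast; linarith
    · rintro ⟨a, b⟩ ⟨c, d⟩ _ _ h
      simp only [Prod.mk.injEq] at h ⊢
      omega
    · rintro ⟨u, v⟩ ⟨h, h2, k2⟩
      simp only at h h2 k2
      have hu : u % 2 = 1 ∧ v % 2 = 0 := by
        have a1 := sq4 u; have a2 := sq4 v
        rcases a2 with a2 | a2
        · omega
        · obtain ⟨i, hi⟩ := sq8 u (by omega)
          zify at hi
          omega
      obtain ⟨x, rfl⟩ : ∃ x, v = 2 * x := ⟨v / 2, by omega⟩
      have k3 : ¬ (3 ∣ x) := by omega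
      obtain ⟨i, hi⟩ := sq24 u hu.1 h2
      have hx : x ^ 2 % 3 = 1 := by
        have := sq3 x (by omega); exact_mod_cast this
      refine ⟨(u, x), ⟨i, x ^ 2 / 3, ?_, ⟨hu.1, h2, ?_⟩, k3, ?_⟩, rfl⟩
      · have : x ^ 2 = 3 * (x ^ 2 / 3) + 1 := by omega
        generalize x ^ 2 / 3 = t at *
        zify at this hi; push_cast at h; zify; linarith
      · simp only; omega
      · simp only; omega
  rw [h, D_step2 _ (by omega), D_parity _ _ rfl (by omega) (by omega)]
  have : (∃ w : ℤ, 8 * (n : ℤ) + 3 = w ^ 2 ∨ 8 * (n : ℤ) + 3 = 3 * w ^ 2) ↔ ∃ z, psiP 3 z n := by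
    constructor
    · rintro ⟨w, h | h⟩
      · have := sq4 w; omega
      · refine ⟨w.natAbs, ?_, ?_⟩
        · have := sq4 w; omega
        · zify; simp [h]
    · rintro ⟨z, hz, h⟩
      refine ⟨z, Or.inr ?_⟩
      zify at h; linarith
  simp only [this]

lemma psi_f21 (n : ℕ) : (theta (psiP 1) * theta (fP 21)).coeff (4 * n + 1) = (theta (fP 12)).coeff n := by
  classical
  rw [coeff_theta_mul _ _ _ (psiP1 1) (psiP2 1 (by norm_num)) (fP2 21 (by norm_num)), coeff_theta]
  have h : {p : ℕ × ℕ | ∃ i j, i + j = 4 * n + 1 ∧ psiP 1 p.1 i ∧ fP 21 p.2 j} = Qset (2 * n + 1) := by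
    ext ⟨u, v⟩
    simp only [fP, psiP, Qset, Set.mem_ofPred_eq]
    constructor
    · rintro ⟨i, j, hij, ⟨h1, h3⟩, k1, k2, k3⟩
      refine ⟨?_, h1, k2⟩
      zify at h3 k3 hij; linarith
    · rintro ⟨h, h2, k2⟩
      have hv : v % 2 = 1 := by
        have a1 := sq4 u; have a2 := sq4 v
        omega
      obtain ⟨i, hi⟩ := sq8 u h2
      obtain ⟨j, hj⟩ := sq24 v hv k2
      refine ⟨i, 21 * j, ?_, ⟨h2, ?_⟩, hv, k2, ?_⟩
      · zify at hi hj; zify; linarith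
      · omega
      · omega
  rw [h, Q_eq_G _ (by omega), G_parity]
  have : (∃ w : ℤ, ¬ (3 ∣ w) ∧ w ^ 2 = 2 * (n : ℤ) + 1) ↔ ∃ z, fP 12 z n := by
    constructor
    · rintro ⟨w, h3, h⟩
      refine ⟨w.natAbs, ?_, by omega, ?_⟩
      · have := sq4 w; omega
      · zify; simp [h]; ring
    · rintro ⟨z, _, h3, h⟩
      refine ⟨z, by omega, ?_⟩
      zify at h; linarith
  simp only [this]

lemma coeff_dissect (P B : (ZMod 2)⟦X⟧) (n : ℕ) :
    (expand 4 (by norm_num) P * B).coeff (4 * n + 1) =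
      (P * PowerSeries.mk fun m => B.coeff (4 * m + 1)).coeff n := by
  rw [coeff_mul, coeff_mul]
  symm
  refine Finset.sum_of_injOn (fun p => (4 * p.1, 4 * p.2 + 1)) ?_ ?_ ?_ ?_
  · rintro ⟨a, b⟩ _ ⟨c, d⟩ _ h
    simp only [Prod.mk.injEq] at h ⊢
    omega
  · rintro ⟨a, b⟩ h
    simp only [Finset.coe_sort_coe, Finset.mem_coe, Finset.HasAntidiagonal.mem_antidiagonal] at h ⊢
    omega
  · rintro ⟨a, b⟩ h h'
    rw [Finset.HasAntidiagonal.mem_antidiagonal] at h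
    simp only at h
    by_cases ha : 4 ∣ a
    · exfalso; apply h'
      obtain ⟨c, rfl⟩ := ha
      refine ⟨(c, n - c), ?_, ?_⟩
      · simp only [Finset.mem_coe, Finset.HasAntidiagonal.mem_antidiagonal]; omega
      · simp only [Prod.mk.injEq, true_and]; omega
    · simp only [coeff_expand_of_not_dvd _ _ _ ha, zero_mul]
  · rintro ⟨a, b⟩ _
    simp only [coeff_expand_mul, coeff_mk]

lemma expand_four (f : (ZMod 2)⟦X⟧) : expand 4 (by norm_num) f = f ^ 4 := by
  have := expand_mul 2 two_ne_zero 2 two_ne_zero f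
  rw [expand_two, expand_two, ← pow_mul] at this
  exact this

lemma main_series : (PowerSeries.mk fun m => (b21 (4 * m + 1) : ZMod 2)) = theta omP * theta (fP 3) := by
  have hne : theta (fP 1) ≠ 0 := by
    intro h
    have h0 := congrArg (coeff 0) h
    rw [coeff_theta, if_pos ⟨1, by norm_num [fP]⟩] at h0
    simp at h0
  have e2 : theta (fP 2) = theta (fP 1) ^ 2 := by rw [← expand_f 2 two_ne_zero, expand_two]
  have hp1 : theta (psiP 1) = theta (fP 1) ^ 3 := by rw [← f_cube, e2]; ring
  have hp3 : theta (psiP 3) = theta (fP 3) ^ 3 := by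
    rw [← expand_psi 3 three_ne_zero, hp1, map_pow, expand_f]
  have e12 : theta (fP 12) = theta (fP 3) ^ 4 := by
    have := expand_mul 3 three_ne_zero 4 four_ne_zero (theta (fP 1))
    rw [expand_four, map_pow, expand_f 3 three_ne_zero, expand_f (3 * 4)] at this
    exact this
  have h1 : theta (fP 1) * (PowerSeries.mk fun m => (b21 (4 * m + 1) : ZMod 2)) = theta (fP 12) := by
    ext n
    rw [← psi_f21, ← gen_b21]
    have : theta (psiP 1) * ((PowerSeries.mk fun n => (b21 n : ZMod 2)) * theta (fP 1)) =
        expand 4 (by norm_num) (theta (fP 1)) * (PowerSeries.mk fun n => (b21 n : ZMod 2)) := by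
      rw [hp1, expand_four]; ring
    rw [this, coeff_dissect]
    simp only [coeff_mk]
  apply mul_left_cancel₀ hne
  rw [h1, ← mul_assoc, f_om, hp3, e12]; ring

theorem stmt_5 (k : ℕ) :
    b21 (4 * k + 1) ≡
      {q : ℕ × ℕ | 8 * q.1 ^ 2 + 3 * q.2 ^ 2 = 24 * k + 11 ∧ ¬ (3 ∣ q.2)}.ncard
        [MOD 2] := by
  rw [← ZMod.natCast_eq_natCast_iff]
  have h := congrArg (coeff k) main_series
  rw [coeff_mk, coeff_theta_mul _ _ _ ?_ omP2 (fP2 3 (by norm_num))] at h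
  · rw [h]
    congr 2
    ext ⟨x, y⟩
    simp only [omP, fP, Set.mem_ofPred_eq]
    constructor
    · rintro ⟨i, j, hij, ⟨h1, h2⟩, k1, k2, k3⟩
      exact ⟨by omega, k2⟩
    · rintro ⟨h, h3⟩
      have hx : ¬ (3 ∣ x) := by
        intro hx
        have : 3 ∣ x ^ 2 := dvd_pow hx two_ne_zero
        omega
      have hy : y % 2 = 1 := by
        have := sq4 y
        zify at h
        omega
      have hx2 : x ^ 2 % 3 = 1 := by
        have := sq3 x (by omega); exact_mod_cast this
      obtain ⟨j, hj⟩ := sq24 y hy h3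
      refine ⟨x ^ 2 / 3, 3 * j, ?_, ⟨hx, ?_⟩, hy, h3, ?_⟩ <;> omega
  · intro x i i' h h'
    have := h.2; have := h'.2; omega
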